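/- Let (R, 𝔪) be a regular local ring of characteristic p > 0, let f ∈ R, and let q = p^e with ord_𝔪(f) = q. Then the F-threshold ft^𝔪(f) equals 1/q if and only if f ∈ 𝔪^{[q]}, where 𝔪^{[q]} is the ideal generated by q-th powers of elements of 𝔪. -/

import Mathlib

open IsLocalRing

namespace RegularParameters

section Domain

/-- A Noetherian local ring whose maximal ideal is generated by at most `dim R` elements
is a domain. -/
theorem isDomain_of_card_le (n : ℕ) : ∀ (R : Type*) [CommRing R] [IsLocalRing R]
    [IsNoetherianRing R] (s : Finset R), Ideal.span (s : Set R) = maximalIdeal R →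
    s.card ≤ n → (n : WithBot ℕ∞) ≤ ringKrullDim R → IsDomain R := by
  classical
  induction n with
  | zero =>
    intro R _ _ _ s hs hc _
    have hs0 : s = ∅ := Finset.card_eq_zero.mp (Nat.le_zero.mp hc)
    have hm : maximalIdeal R = ⊥ := by rw [← hs, hs0]; simp
    exact (IsLocalRing.isField_iff_maximalIdeal_eq.mpr hm).isDomain
  | succ n ih =>
    intro R _ _ _ s hs hc hd
    have hnotmin : ∀ P ∈ minimalPrimes R, ¬ maximalIdeal R ≤ P := by
      intro P hP hle
      have hPp : P.IsPrime := hP.1.1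
      have hPm : P = maximalIdeal R :=
        le_antisymm (IsLocalRing.le_maximalIdeal hPp.ne_top) hle
      have h0 : (maximalIdeal R).height = 0 := by
        rw [Ideal.height_eq_zero_iff, ← hPm]
        exact hP
      rw [← IsLocalRing.maximalIdeal_height_eq_ringKrullDim, h0] at hd
      have : ((n + 1 : ℕ) : ℕ∞) ≤ 0 := by exact_mod_cast hd
      simp at this
    obtain ⟨P₀, hP₀⟩ : (minimalPrimes R).Nonempty := by
      obtain ⟨P, hP, -⟩ := Ideal.exists_minimalPrimes_le (I := (⊥ : Ideal R))
        (J := maximalIdeal R) bot_le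
      exact ⟨P, hP⟩
    have hsq : ¬ maximalIdeal R ≤ maximalIdeal R ^ 2 := by
      intro hle
      have hbot : maximalIdeal R = ⊥ := by
        refine Submodule.eq_bot_of_le_smul_of_le_jacobson_bot (maximalIdeal R) _
          (IsNoetherian.noetherian _) ?_ (IsLocalRing.maximalIdeal_le_jacobson _)
        rwa [smul_eq_mul, ← pow_two]
      exact hnotmin P₀ hP₀ (hbot ▸ bot_le)
    obtain ⟨x, hxm, hx⟩ : ∃ x ∈ maximalIdeal R,
        x ∉ maximalIdeal R ^ 2 ∧ ∀ P ∈ minimalPrimes R, x ∉ P := by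
      by_contra! hcon
      have hfin : (insert (maximalIdeal R ^ 2) (minimalPrimes R)).Finite :=
        (minimalPrimes.finite_of_isNoetherianRing R).insert _
      have := (Ideal.subset_union_prime_finite (I := maximalIdeal R) hfin (f := id)
        (maximalIdeal R ^ 2) (maximalIdeal R ^ 2) (by
          intro J hJ h1 _
          rcases hJ with rfl | hJ
          · exact absurd rfl h1
          · exact hJ.1.1)).1 (by
          intro y hy
          simp only [Set.mem_iUnion]
          by_cases hy2 : y ∈ maximalIdeal R ^ 2
          · exact ⟨_, Set.mem_insert _ _, hy2⟩
          · obtain ⟨P, hP, hyP⟩ := hcon y hy hy2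
            exact ⟨P, Set.mem_insert_of_mem _ hP, hyP⟩)
      obtain ⟨J, hJ, hle⟩ := this
      rcases hJ with rfl | hJ
      · exact hsq hle
      · exact hnotmin J hJ hle
    obtain ⟨hx2, hxP⟩ := hx
    obtain ⟨c, hcx⟩ : ∃ c : R → R, ∑ a ∈ s, c a • a = x := by
      rw [← hs] at hxm
      obtain ⟨c, -, hcx⟩ := Submodule.mem_span_finset.mp hxm
      exact ⟨c, hcx⟩
    have hsm : ∀ a ∈ s, a ∈ maximalIdeal R := fun a ha => hs ▸ Ideal.subset_span ha
    obtain ⟨y, hys, hyu⟩ : ∃ y ∈ s, IsUnit (c y) := by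
      by_contra! hcon
      apply hx2
      rw [← hcx, pow_two]
      refine Ideal.sum_mem _ fun a ha => ?_
      exact Ideal.mul_mem_mul ((IsLocalRing.mem_maximalIdeal _).mpr (hcon a ha)) (hsm a ha)
    have hxne : Ideal.span {x} ≠ ⊤ := fun h => by
      have := (Ideal.span_singleton_le_iff_mem _).mpr hxm
      exact (maximalIdeal.isMaximal R).ne_top (top_le_iff.mp (h ▸ this))
    have : Nontrivial (R ⧸ Ideal.span {x}) := Ideal.Quotient.nontrivial_iff.mpr hxne
    have hloc : IsLocalRing (R ⧸ Ideal.span {x}) :=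
      IsLocalRing.of_surjective' (Ideal.Quotient.mk _) Ideal.Quotient.mk_surjective
    have hmax : maximalIdeal (R ⧸ Ideal.span {x}) =
        (maximalIdeal R).map (Ideal.Quotient.mk (Ideal.span {x})) :=
      (IsLocalRing.map_maximalIdeal_of_surjective _ Ideal.Quotient.mk_surjective).symm
    have hdom : IsDomain (R ⧸ Ideal.span {x}) := by
      refine ih _ ((s.erase y).image (Ideal.Quotient.mk (Ideal.span {x}))) ?_ ?_ ?_
      · rw [hmax, ← hs, Ideal.map_span, Finset.coe_image]
        refine le_antisymm (Ideal.span_mono (Set.image_mono (by simp))) ?_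
        rw [Ideal.span_le]
        rintro _ ⟨a, ha, rfl⟩
        by_cases hay : a = y
        · subst hay
          have hsum : c a * a = x - ∑ b ∈ s.erase a, c b • b := by
            rw [← hcx, ← Finset.add_sum_erase s _ hys]; simp
          have hmem : Ideal.Quotient.mk (Ideal.span {x}) (c a * a) ∈
              Ideal.span (Ideal.Quotient.mk (Ideal.span {x}) '' ↑(s.erase a)) := by
            rw [hsum, map_sub, Ideal.Quotient.eq_zero_iff_mem.mpr
              (Ideal.mem_span_singleton_self x), zero_sub, map_sum]
            refine neg_mem (Ideal.sum_mem _ fun b hb => ?_)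
            rw [smul_eq_mul, map_mul]
            exact Ideal.mul_mem_left _ _ (Ideal.subset_span ⟨b, hb, rfl⟩)
          rw [map_mul] at hmem
          exact (Ideal.unit_mul_mem_iff_mem _ (hyu.map _)).mp hmem
        · exact Ideal.subset_span ⟨a, by simpa [hay] using ha, rfl⟩
      · refine Finset.card_image_le.trans ?_
        rw [Finset.card_erase_of_mem hys]; omega
      · have h1 := ringKrullDim_le_ringKrullDim_quotient_add_card (R := R) {x} (by
          simpa [IsLocalRing.ringJacobson_eq_maximalIdeal] using hxm)
        have h2 := hd.trans h1
        rw [Finset.card_singleton] at h2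
        push_cast at h2
        rw [Finset.coe_singleton] at h2
        exact ENat.WithBot.add_le_add_one_right_iff.mp h2
    have hprime : (Ideal.span {x}).IsPrime := (Ideal.Quotient.isDomain_iff_prime _).mp hdom
    obtain ⟨P, hP, hPx⟩ := Ideal.exists_minimalPrimes_le (I := (⊥ : Ideal R))
        (J := Ideal.span {x}) bot_le
    have hPp : P.IsPrime := hP.1.1
    have hPbot : P = ⊥ := by
      refine Submodule.eq_bot_of_le_smul_of_le_jacobson_bot (maximalIdeal R) P
        (IsNoetherian.noetherian _) ?_ (IsLocalRing.maximalIdeal_le_jacobson _)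
      intro z hz
      obtain ⟨a, rfl⟩ := Ideal.mem_span_singleton'.mp (hPx hz)
      have ha : a ∈ P := (hPp.mem_or_mem hz).resolve_right (hxP P hP)
      rw [mul_comm]
      exact Ideal.mul_mem_mul hxm ha
    have : (⊥ : Ideal R).IsPrime := hPbot ▸ hPp
    exact IsDomain.of_bot_isPrime R

variable {R : Type*} [CommRing R] [IsLocalRing R] [IsNoetherianRing R]

/-- In a regular local ring, each member of a regular system of parameters is a nonzerodivisor
modulo any subset of the others. -/
theorem mem_span_of_mul_mem {n : ℕ} {x : Fin n → R}
    (hx : Ideal.span (Set.range x) = maximalIdeal R) (hd : ringKrullDim R = n)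
    (S : Finset (Fin n)) {i : Fin n} (hi : i ∉ S) {g : R}
    (hg : x i * g ∈ Ideal.span (x '' S)) : g ∈ Ideal.span (x '' S) := by
  classical
  have hxm : ∀ j, x j ∈ maximalIdeal R := fun j => hx ▸ Ideal.subset_span ⟨j, rfl⟩
  have hle : Ideal.span (x '' S) ≤ maximalIdeal R := by
    rw [Ideal.span_le]; rintro _ ⟨j, -, rfl⟩; exact hxm j
  have hne : Ideal.span (x '' S) ≠ ⊤ := fun h =>
    (maximalIdeal.isMaximal R).ne_top (top_le_iff.mp (h ▸ hle))
  have : Nontrivial (R ⧸ Ideal.span (x '' S)) := Ideal.Quotient.nontrivial_iff.mpr hne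
  have hloc : IsLocalRing (R ⧸ Ideal.span (x '' S)) :=
    IsLocalRing.of_surjective' (Ideal.Quotient.mk _) Ideal.Quotient.mk_surjective
  have hmax : maximalIdeal (R ⧸ Ideal.span (x '' S)) =
      (maximalIdeal R).map (Ideal.Quotient.mk (Ideal.span (x '' S))) :=
    (IsLocalRing.map_maximalIdeal_of_surjective _ Ideal.Quotient.mk_surjective).symm
  have hspan : ∀ T : Finset (Fin n), (∀ j ∉ T, x j ∈ Ideal.span (x '' S)) →
      Ideal.span ((T.image fun j => Ideal.Quotient.mk (Ideal.span (x '' S)) (x j) :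
        Finset (R ⧸ Ideal.span (x '' S))) : Set (R ⧸ Ideal.span (x '' S))) =
        maximalIdeal (R ⧸ Ideal.span (x '' S)) := by
    intro T hT
    rw [hmax, ← hx, Ideal.map_span]
    refine le_antisymm (Ideal.span_mono ?_) (Ideal.span_le.mpr ?_)
    · intro z hz
      simp only [Finset.coe_image, Set.mem_image] at hz
      obtain ⟨j, -, rfl⟩ := hz
      exact ⟨x j, ⟨j, rfl⟩, rfl⟩
    · rintro _ ⟨_, ⟨j, rfl⟩, rfl⟩
      by_cases hj : j ∈ T
      · exact Ideal.subset_span (Finset.mem_coe.mpr (Finset.mem_image_of_mem _ hj))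
      · rw [Ideal.Quotient.eq_zero_iff_mem.mpr (hT j hj)]
        exact Ideal.zero_mem _
  have hdim : ((Sᶜ.card : ℕ) : WithBot ℕ∞) ≤ ringKrullDim (R ⧸ Ideal.span (x '' S)) := by
    have h1 := ringKrullDim_le_ringKrullDim_quotient_add_card (R := R) (S.image x) (by
      rw [IsLocalRing.ringJacobson_eq_maximalIdeal]
      intro z hz
      simp only [Finset.coe_image, Set.mem_image] at hz
      obtain ⟨j, -, rfl⟩ := hz
      exact hxm j)
    rw [Finset.coe_image, hd] at h1
    have hcard : Sᶜ.card + S.card = n := by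
      simp [Finset.card_compl_add_card]
    have h2 : ((Sᶜ.card : ℕ) : WithBot ℕ∞) + (S.card : ℕ) ≤
        ringKrullDim (R ⧸ Ideal.span (x '' S)) + (S.card : ℕ) := by
      rw [← Nat.cast_add, hcard]
      refine h1.trans ?_
      gcongr
      exact Finset.card_image_le
    exact ENat.WithBot.add_le_add_natCast_right_iff.mp h2
  have hdom : IsDomain (R ⧸ Ideal.span (x '' S)) :=
    isDomain_of_card_le Sᶜ.card _ _ (hspan Sᶜ fun j hj =>
      Ideal.subset_span ⟨j, by simpa using hj, rfl⟩) Finset.card_image_le hdim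
  have hprime := (Ideal.Quotient.isDomain_iff_prime _).mp hdom
  refine (hprime.mem_or_mem hg).resolve_left fun hxi => ?_
  have hs := hspan (insert i S)ᶜ fun j hj => by
    rcases Finset.mem_insert.mp (by simpa only [Finset.mem_compl, not_not] using hj) with rfl | h
    · exact hxi
    · exact Ideal.subset_span ⟨j, h, rfl⟩
  have h1 := ringKrullDim_le_spanFinrank_maximalIdeal (R ⧸ Ideal.span (x '' S))
  rw [← hs] at h1
  have h2 := hdim.trans h1
  have h3 := (Nat.cast_le (α := WithBot ℕ∞)).mp h2
  have h4 := h3.trans (Submodule.spanFinrank_span_le_ncard_of_finite (Finset.finite_toSet _))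
  rw [Set.ncard_coe_finset] at h4
  have h5 := h4.trans Finset.card_image_le
  have h6 := Finset.card_compl_add_card S
  have h7 := Finset.card_compl_add_card (insert i S)
  rw [Finset.card_insert_of_notMem hi] at h7
  omega

end Domain

section PowIdeal

variable {R ι : Type*} [CommRing R]

/-- The ideal generated by the powers `x j ^ b j` for `j ∈ S`. -/
def powIdeal (x : ι → R) (b : ι → ℕ) (S : Finset ι) : Ideal R :=
  Ideal.span ((fun j => x j ^ b j) '' S)

/-- Each member of the family `x` is a nonzerodivisor modulo any finite subfamily of the others. -/
def IsPermutableRegular (x : ι → R) : Prop :=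
  ∀ (S : Finset ι) (i : ι), i ∉ S → ∀ g, x i * g ∈ Ideal.span (x '' S) → g ∈ Ideal.span (x '' S)

variable {x : ι → R} {b c : ι → ℕ} {S T : Finset ι}

theorem pow_mem_powIdeal {j : ι} (hj : j ∈ S) : x j ^ b j ∈ powIdeal x b S :=
  Ideal.subset_span ⟨j, hj, rfl⟩

theorem powIdeal_le {I : Ideal R} (h : ∀ j ∈ S, x j ^ b j ∈ I) : powIdeal x b S ≤ I := by
  refine Ideal.span_le.mpr ?_
  rintro _ ⟨j, hj, rfl⟩
  exact h j hj

theorem powIdeal_congr (h : ∀ j ∈ S, b j = c j) : powIdeal x b S = powIdeal x c S := by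
  rw [powIdeal, powIdeal, Set.image_congr fun j hj => by rw [h j hj]]

theorem powIdeal_mono (hST : S ⊆ T) : powIdeal x b S ≤ powIdeal x b T :=
  powIdeal_le fun _ hj => pow_mem_powIdeal (hST hj)

theorem powIdeal_anti (h : ∀ j ∈ S, c j ≤ b j) : powIdeal x b S ≤ powIdeal x c S :=
  powIdeal_le fun _ hj => Ideal.mem_of_dvd _ (pow_dvd_pow _ (h _ hj)) (pow_mem_powIdeal hj)

theorem powIdeal_eq_top {j : ι} (hj : j ∈ S) (h : b j = 0) : powIdeal x b S = ⊤ :=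
  (Ideal.eq_top_iff_one _).mpr (by simpa [h] using pow_mem_powIdeal (x := x) (b := b) hj)

theorem powIdeal_eq_span (h : ∀ j ∈ S, b j = 1) : powIdeal x b S = Ideal.span (x '' S) := by
  rw [powIdeal, Set.image_congr fun j hj => by rw [h j hj, pow_one]]

variable [DecidableEq ι]

theorem powIdeal_update_of_notMem {j : ι} {m : ℕ} (hj : j ∉ S) :
    powIdeal x (Function.update b j m) S = powIdeal x b S :=
  powIdeal_congr fun k hk => by
    rw [Function.update_of_ne]
    rintro rfl
    exact hj hk

theorem mem_powIdeal_iff_erase {j : ι} (hj : j ∈ S) {g : R} :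
    g ∈ powIdeal x b S ↔ ∃ w, g - x j ^ b j * w ∈ powIdeal x b (S.erase j) := by
  have h : powIdeal x b S = powIdeal x b (S.erase j) ⊔ Ideal.span {x j ^ b j} := by
    conv_lhs => rw [← Finset.insert_erase hj]
    rw [powIdeal, powIdeal, Finset.coe_insert, Set.image_insert_eq, Ideal.span_insert, sup_comm]
  rw [h, sup_comm, Ideal.mem_span_singleton_sup]
  constructor
  · rintro ⟨w, u, hu, rfl⟩
    exact ⟨w, by rwa [mul_comm, add_sub_cancel_left]⟩
  · rintro ⟨w, hw⟩
    exact ⟨w, _, hw, by ring⟩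

theorem mem_powIdeal_update_iff {j : ι} (hj : j ∈ S) {m : ℕ} {g : R} :
    g ∈ powIdeal x (Function.update b j m) S ↔
      ∃ w, g - x j ^ m * w ∈ powIdeal x b (S.erase j) := by
  rw [mem_powIdeal_iff_erase hj, Function.update_self,
    powIdeal_update_of_notMem (Finset.notMem_erase _ _)]

theorem IsPermutableRegular.mem_powIdeal_of_mul_mem (hx : IsPermutableRegular x) (N : ℕ) :
    ∀ (S : Finset ι) (b : ι → ℕ), ∑ j ∈ S, b j = N → ∀ i ∉ S, ∀ g, x i * g ∈ powIdeal x b S →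
      g ∈ powIdeal x b S := by
  induction N using Nat.strong_induction_on with
  | _ N ih =>
    intro S b hN i hi g hg
    by_cases h0 : ∃ j ∈ S, b j = 0
    · obtain ⟨j, hj, hb⟩ := h0
      rw [powIdeal_eq_top hj hb]
      trivial
    by_cases h1 : ∀ j ∈ S, b j = 1
    · rw [powIdeal_eq_span h1] at hg ⊢
      exact hx S i hi g hg
    push Not at h0 h1
    obtain ⟨j, hj, hb1⟩ := h1
    have hb0 := h0 j hj
    have hsum := Finset.add_sum_erase S b hj
    have hupd : ∀ m, ∑ k ∈ S, Function.update b j m k = m + ∑ k ∈ S.erase j, b k := by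
      intro m
      rw [Finset.sum_update_of_mem hj, Finset.sdiff_singleton_eq_erase]
    have hgj : g ∈ powIdeal x (Function.update b j (b j - 1)) S := by
      refine ih _ ?_ S (Function.update b j (b j - 1)) rfl i hi g
        (powIdeal_anti (fun k _ => ?_) hg)
      · rw [hupd]; omega
      · by_cases hk : k = j
        · subst hk; simp
        · simp [hk]
    obtain ⟨v, hv⟩ := (mem_powIdeal_update_iff hj).mp hgj
    obtain ⟨w, hw⟩ := (mem_powIdeal_iff_erase hj).mp hg
    have key : ∀ m z, x j ^ m * z ∈ powIdeal x b (S.erase j) → z ∈ powIdeal x b (S.erase j) := by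
      intro m
      induction m with
      | zero => intro z hz; simpa using hz
      | succ m ihm =>
        intro z hz
        refine ihm z (ih _ ?_ (S.erase j) b rfl j (Finset.notMem_erase _ _) _ ?_)
        · omega
        · rwa [← mul_assoc, ← pow_succ']
    have hvw : x i * v - x j * w ∈ powIdeal x b (S.erase j) := by
      refine key (b j - 1) _ ?_
      have hpow : x j ^ b j = x j ^ (b j - 1) * x j := by
        rw [← pow_succ]; congr 1; omega
      have := Ideal.sub_mem _ hw (Ideal.mul_mem_left _ (x i) hv)
      rw [hpow] at this
      convert this using 1
      ring
    have hv1 : v ∈ powIdeal x (Function.update b j 1) S := by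
      refine ih _ ?_ S (Function.update b j 1) rfl i hi v ?_
      · rw [hupd]; omega
      · exact (mem_powIdeal_update_iff hj).mpr ⟨w, by simpa using hvw⟩
    obtain ⟨u, hu⟩ := (mem_powIdeal_update_iff hj).mp hv1
    refine (mem_powIdeal_iff_erase hj).mpr ⟨u, ?_⟩
    have hpow : x j ^ b j = x j ^ (b j - 1) * x j := by
      rw [← pow_succ]; congr 1; omega
    have := Ideal.add_mem _ hv (Ideal.mul_mem_left _ (x j ^ (b j - 1)) hu)
    rw [hpow]
    convert this using 1
    ring

theorem IsPermutableRegular.mem_powIdeal_of_pow_mul_mem (hx : IsPermutableRegular x) {i : ι}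
    (hi : i ∉ S) (m : ℕ) {g : R} (hg : x i ^ m * g ∈ powIdeal x b S) : g ∈ powIdeal x b S := by
  induction m with
  | zero => simpa using hg
  | succ m ih =>
    refine ih (hx.mem_powIdeal_of_mul_mem _ S b rfl i hi _ ?_)
    rwa [← mul_assoc, ← pow_succ']

theorem IsPermutableRegular.mem_powIdeal_update_of_pow_mul_mem (hx : IsPermutableRegular x)
    {i : ι} (hi : i ∈ S) {m k : ℕ} {g : R}
    (hg : x i ^ m * g ∈ powIdeal x (Function.update b i (m + k)) S) :
    g ∈ powIdeal x (Function.update b i k) S := by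
  obtain ⟨w, hw⟩ := (mem_powIdeal_update_iff hi).mp hg
  refine (mem_powIdeal_update_iff hi).mpr ⟨w, hx.mem_powIdeal_of_pow_mul_mem
    (Finset.notMem_erase _ _) m ?_⟩
  convert hw using 1
  ring

theorem IsPermutableRegular.mem_powIdeal_of_prod_mul_mem (hx : IsPermutableRegular x)
    (a : ι → ℕ) (hTS : T ⊆ S) : ∀ (b : ι → ℕ) (g : R),
    (∏ i ∈ T, x i ^ a i) * g ∈ powIdeal x (fun i => (if i ∈ T then a i else 0) + b i) S →
    g ∈ powIdeal x b S := by
  induction T using Finset.induction_on with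
  | empty => intro b g hg; simpa using hg
  | insert i T hi ih =>
    intro b g hg
    have hiS : i ∈ S := hTS (Finset.mem_insert_self _ _)
    have h1 : x i ^ a i * g ∈ powIdeal x (Function.update b i (a i + b i)) S := by
      refine ih ((Finset.subset_insert _ _).trans hTS) _ _ ?_
      rw [Finset.prod_insert hi] at hg
      rw [mul_left_comm, ← mul_assoc]
      convert hg using 1
      refine powIdeal_congr fun k _ => ?_
      by_cases hk : k = i
      · subst hk; simp [hi]
      · simp [hk]
    simpa using hx.mem_powIdeal_update_of_pow_mul_mem hiS h1

end PowIdeal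

section Frobenius

variable {R ι : Type*} [CommRing R] {x : ι → R} {b : ι → ℕ} {S : Finset ι}

theorem pow_mem_span_image_pow (p : ℕ) [ExpChar R p] (k : ℕ) {s : Set R} {u : R}
    (hu : u ∈ Ideal.span s) : u ^ p ^ k ∈ Ideal.span ((· ^ p ^ k) '' s) := by
  have := Ideal.mem_map_of_mem (iterateFrobenius R p k) hu
  rwa [Ideal.map_span] at this

theorem pow_mem_powIdeal_mul (p : ℕ) [ExpChar R p] (k : ℕ) {u : R} (hu : u ∈ powIdeal x b S) :
    u ^ p ^ k ∈ powIdeal x (fun i => p ^ k * b i) S := by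
  have := pow_mem_span_image_pow p k hu
  rw [Set.image_image] at this
  simpa only [powIdeal, ← pow_mul, mul_comm] using this

variable [Fintype ι]

theorem span_image_pow_eq_powIdeal (p : ℕ) [ExpChar R p] (k : ℕ) :
    Ideal.span ((· ^ p ^ k) '' (Ideal.span (Set.range x) : Set R)) =
      powIdeal x (fun _ => p ^ k) Finset.univ := by
  refine le_antisymm (Ideal.span_le.mpr ?_) (powIdeal_le fun j _ => ?_)
  · rintro _ ⟨u, hu, rfl⟩
    have := pow_mem_span_image_pow p k hu
    rw [← Set.range_comp] at this
    simpa [powIdeal, Function.comp_def] using this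
  · exact Ideal.subset_span ⟨x j, Ideal.subset_span ⟨j, rfl⟩, rfl⟩

variable [IsLocalRing R]

/-- A substitute for flatness of Frobenius: if `f ∉ 𝔟 = (x i ^ b i)` then
`(𝔟^{[p^k]} : f^{p^k}) ⊆ 𝔪^{[p^k]}`. -/
theorem IsPermutableRegular.mem_powIdeal_of_pow_mul_mem_powIdeal_mul
    (hx : IsPermutableRegular x) (hm : Ideal.span (Set.range x) = maximalIdeal R)
    (p : ℕ) [ExpChar R p] (k : ℕ) (g : R) (N : ℕ) : ∀ (b : ι → ℕ) (f : R), ∑ i, b i = N →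
    f ∉ powIdeal x b Finset.univ → f ^ p ^ k * g ∈ powIdeal x (fun i => p ^ k * b i) Finset.univ →
    g ∈ powIdeal x (fun _ => p ^ k) Finset.univ := by
  classical
  induction N using Nat.strong_induction_on with
  | _ N ih =>
    intro b f hN hf hg
    by_cases h1 : ∀ j, b j = 1
    · rw [powIdeal_eq_span fun j _ => h1 j, Finset.coe_univ, Set.image_univ, hm,
        mem_maximalIdeal, mem_nonunits_iff, not_not] at hf
      simp only [h1, mul_one] at hg
      exact (Ideal.unit_mul_mem_iff_mem _ (hf.pow _)).mp hg
    push Not at h1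
    obtain ⟨j, hb1⟩ := h1
    have hj := Finset.mem_univ j
    have hb0 : b j ≠ 0 := fun h => hf (by rw [powIdeal_eq_top hj h]; trivial)
    have hsum := Finset.add_sum_erase Finset.univ b hj
    have hupd : ∀ m, ∑ k, Function.update b j m k = m + ∑ k ∈ Finset.univ.erase j, b k := by
      intro m
      rw [Finset.sum_update_of_mem hj, Finset.sdiff_singleton_eq_erase]
    have hmul : ∀ m, (fun i => p ^ k * Function.update b j m i) =
        Function.update (fun i => p ^ k * b i) j (p ^ k * m) := by
      intro m
      ext i
      by_cases hi : i = j
      · subst hi; simp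
      · simp [hi]
    by_cases hfj : f ∈ powIdeal x (Function.update b j (b j - 1)) Finset.univ
    · obtain ⟨v, hv⟩ := (mem_powIdeal_update_iff hj).mp hfj
      refine ih _ ?_ (Function.update b j 1) v rfl ?_ ?_
      · rw [hupd]; omega
      · intro hv1
        obtain ⟨w, hw⟩ := (mem_powIdeal_update_iff hj).mp hv1
        refine hf ((mem_powIdeal_iff_erase hj).mpr ⟨w, ?_⟩)
        have hpow : x j ^ b j = x j ^ (b j - 1) * x j := by
          rw [← pow_succ]; congr 1; omega
        have := Ideal.add_mem _ hv (Ideal.mul_mem_left _ (x j ^ (b j - 1)) hw)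
        rw [hpow]
        convert this using 1
        ring
      · rw [hmul]
        refine hx.mem_powIdeal_update_of_pow_mul_mem hj (m := p ^ k * (b j - 1)) ?_
        rw [← mul_add, Nat.sub_add_cancel (Nat.one_le_iff_ne_zero.mpr hb0),
          Function.update_eq_self (f := fun i => p ^ k * b i)]
        have h2 := powIdeal_mono (Finset.erase_subset j Finset.univ)
          (pow_mem_powIdeal_mul p k hv)
        rw [sub_pow_expChar_pow] at h2
        have := Ideal.sub_mem _ hg (Ideal.mul_mem_right g _ h2)
        convert this using 1
        ring
    · refine ih _ ?_ (Function.update b j (b j - 1)) f rfl hfj (powIdeal_anti (fun i _ => ?_) hg)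
      · rw [hupd]; omega
      · refine Nat.mul_le_mul_left _ ?_
        by_cases hi : i = j
        · subst hi; simp
        · simp [hi]

end Frobenius

section Order

variable {R ι : Type*} [CommRing R] [Fintype ι] {x : ι → R}

theorem span_range_pow_le_span_monomials [DecidableEq ι] (N : ℕ) :
    Ideal.span (Set.range x) ^ N ≤
      Ideal.span ((fun a : ι → ℕ => ∏ i, x i ^ a i) '' (Finset.univ.piAntidiag N : Finset (ι → ℕ))) := by
  induction N with
  | zero => simp
  | succ N ih =>
    rw [pow_succ]
    refine (Ideal.mul_mono_left ih).trans ?_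
    rw [Ideal.span_mul_span', Ideal.span_le]
    rintro _ ⟨_, ⟨a, ha, rfl⟩, _, ⟨j, rfl⟩, rfl⟩
    refine Ideal.subset_span ⟨a + Pi.single j 1, ?_, ?_⟩
    · have ha' : ∑ i, a i = N := by simpa using ha
      simp [Finset.sum_add_distrib, ha']
    · simp only [Pi.add_apply, pow_add, Finset.prod_mul_distrib]
      simp [Pi.single_apply, pow_ite]

theorem span_range_pow_le_powIdeal {a : ι → ℕ} {N : ℕ} (h : ∑ i, a i < N) :
    Ideal.span (Set.range x) ^ N ≤ powIdeal x (fun i => a i + 1) Finset.univ := by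
  classical
  refine (span_range_pow_le_span_monomials N).trans (Ideal.span_le.mpr ?_)
  rintro _ ⟨c, hc, rfl⟩
  have hc' : ∑ i, c i = N := by simpa using hc
  obtain ⟨i, -, hi⟩ := Finset.exists_lt_of_sum_lt (hc'.symm ▸ h)
  refine Ideal.mem_of_dvd _ ?_ (pow_mem_powIdeal (Finset.mem_univ i))
  exact (pow_dvd_pow _ hi).trans (Finset.dvd_prod_of_mem (fun i => x i ^ c i) (Finset.mem_univ i))

theorem prod_pow_mem_span_range_pow (a : ι → ℕ) :
    ∏ i, x i ^ a i ∈ Ideal.span (Set.range x) ^ ∑ i, a i := by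
  rw [← Finset.prod_pow_eq_pow_sum]
  exact Ideal.prod_mem_prod fun i _ =>
    Ideal.pow_mem_pow (Ideal.subset_span (Set.mem_range_self i)) _

variable [IsLocalRing R]

theorem IsPermutableRegular.prod_pow_notMem (hx : IsPermutableRegular x)
    (hm : Ideal.span (Set.range x) = maximalIdeal R) {u : R} (hu : IsUnit u) (a : ι → ℕ) :
    (∏ i, x i ^ a i) * u ∉ powIdeal x (fun i => a i + 1) Finset.univ := by
  classical
  intro h
  have := hx.mem_powIdeal_of_prod_mul_mem a (Finset.Subset.refl Finset.univ) (fun _ => 1) u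
    (by simpa using h)
  rw [powIdeal_eq_span fun _ _ => rfl, Finset.coe_univ, Set.image_univ, hm] at this
  exact (mem_maximalIdeal _).mp this hu

theorem IsPermutableRegular.exists_notMem_powIdeal (hx : IsPermutableRegular x)
    (hm : Ideal.span (Set.range x) = maximalIdeal R) {f : R} {N : ℕ}
    (hf : f ∈ maximalIdeal R ^ N) (hf' : f ∉ maximalIdeal R ^ (N + 1)) :
    ∃ a : ι → ℕ, ∑ i, a i = N ∧ f ∉ powIdeal x (fun i => a i + 1) Finset.univ := by
  classical
  rw [← hm] at hf
  obtain ⟨c, hc⟩ := (Submodule.mem_span_image_finset_iff_exists_fun' R).mp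
    (span_range_pow_le_span_monomials N hf)
  obtain ⟨a, ha, hau⟩ : ∃ a ∈ Finset.univ.piAntidiag N, IsUnit (c a) := by
    by_contra! hcon
    apply hf'
    rw [← hc, pow_succ']
    refine Ideal.sum_mem _ fun a ha => Ideal.mul_mem_mul (hcon a ha) ?_
    have : ∑ i, a i = N := by simpa using ha
    rw [← hm, ← this]
    exact prod_pow_mem_span_range_pow a
  have hsum : ∑ i, a i = N := by simpa using ha
  refine ⟨a, hsum, fun hmem => hx.prod_pow_notMem hm hau a ?_⟩
  rw [← Finset.add_sum_erase _ _ ha] at hc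
  have hrest : ∑ d ∈ (Finset.univ.piAntidiag N).erase a, c d • ∏ i, x i ^ d i ∈
      powIdeal x (fun i => a i + 1) Finset.univ := by
    refine Ideal.sum_mem _ fun d hd => Ideal.mul_mem_left _ _ ?_
    obtain ⟨hda, hd⟩ := Finset.mem_erase.mp hd
    have hd' : ∑ i, d i = N := by simpa using hd
    obtain ⟨i, hi⟩ : ∃ i, a i < d i := by
      by_contra! hle
      refine hda (funext fun i => ?_)
      exact (Finset.sum_eq_sum_iff_of_le fun i _ => hle i).mp (hd'.trans hsum.symm) i
        (Finset.mem_univ i)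
    refine Ideal.mem_of_dvd _ ?_ (pow_mem_powIdeal (Finset.mem_univ i))
    exact (pow_dvd_pow _ hi).trans
      (Finset.dvd_prod_of_mem (fun i => x i ^ d i) (Finset.mem_univ i))
  have := Ideal.sub_mem _ hmem hrest
  rw [← hc, add_sub_cancel_right, smul_eq_mul, mul_comm] at this
  exact this

theorem IsPermutableRegular.frobenius_pow_notMem (hx : IsPermutableRegular x)
    (hm : Ideal.span (Set.range x) = maximalIdeal R) (p : ℕ) [ExpChar R p] {f : R} {N : ℕ}
    (hf : f ∈ maximalIdeal R ^ N) (hf' : f ∉ maximalIdeal R ^ (N + 1)) (k : ℕ) :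
    f ^ p ^ k ∉ maximalIdeal R ^ (p ^ k * N + 1) := by
  intro hmem
  obtain ⟨a, ha, hfa⟩ := hx.exists_notMem_powIdeal hm hf hf'
  have hp : 1 ≤ p ^ k := Nat.one_le_pow _ _ (expChar_pos R p)
  have h1 : (∏ i, x i ^ (p ^ k - 1)) * 1 ∈ powIdeal x (fun _ => p ^ k - 1 + 1) Finset.univ := by
    rw [mul_one, Nat.sub_add_cancel hp]
    refine hx.mem_powIdeal_of_pow_mul_mem_powIdeal_mul hm p k _ _ _ f rfl hfa ?_
    have hprod := prod_pow_mem_span_range_pow (x := x) fun _ => p ^ k - 1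
    have h2 := Ideal.mul_mem_mul hmem (hm ▸ hprod)
    rw [← pow_add, ← hm] at h2
    have h3 := span_range_pow_le_powIdeal (a := fun i => p ^ k * a i + (p ^ k - 1)) (by
      rw [Finset.sum_add_distrib, ← Finset.mul_sum, ha]; omega) h2
    convert h3 using 3 with i
    rw [mul_add]; omega
  exact hx.prod_pow_notMem hm isUnit_one _ h1

theorem IsPermutableRegular.le_mul_of_pow_mem (hx : IsPermutableRegular x)
    (hm : Ideal.span (Set.range x) = maximalIdeal R) (p : ℕ) [CharP R p] (hp : p.Prime)
    {f : R} {N : ℕ} (hf : f ∈ maximalIdeal R ^ N) (hf' : f ∉ maximalIdeal R ^ (N + 1))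
    {t M : ℕ} (ht : f ^ t ∈ maximalIdeal R ^ M) : M ≤ t * N := by
  have : ExpChar R p := ExpChar.prime hp
  by_contra! hlt
  have htp : t ≤ p ^ t := (Nat.lt_pow_self hp.one_lt).le
  refine hx.frobenius_pow_notMem hm p hf hf' t ?_
  obtain ⟨d, hd⟩ := Nat.exists_eq_add_of_le htp
  have h1 : f ^ d ∈ maximalIdeal R ^ (N * d) := by
    rw [pow_mul]; exact Ideal.pow_mem_pow hf d
  have h2 := Ideal.mul_mem_mul ht h1
  rw [← pow_add, ← pow_add, ← hd] at h2
  refine Ideal.pow_le_pow_right ?_ h2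
  rw [hd]
  nlinarith

end Order

end RegularParameters

open IsLocalRing

/-- Let `(R, 𝔪)` be a regular local ring of characteristic `p > 0`,
let `f ∈ R`, and let `q = p^e` with `ord_𝔪(f) = q`.  Then the F-threshold
`ft^𝔪(f) = inf { t/p^{e'} : f^t ∈ 𝔪^{[p^{e'}]} }` equals `1/q` if and only if
`f ∈ 𝔪^{[q]}`, the ideal generated by `q`-th powers of elements of `𝔪`.
Regularity is expressed by requiring the maximal ideal to be generated by
`ringKrullDim R` many elements. -/
theorem stmt_2 (R : Type*) [CommRing R] [IsLocalRing R] [IsNoetherianRing R]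
    (p : ℕ) (hp : p.Prime) [CharP R p]
    (hreg : ∃ (n : ℕ) (x : Fin n → R),
      Ideal.span (Set.range x) = maximalIdeal R ∧ ringKrullDim R = n)
    (f : R) (e : ℕ) (q : ℕ) (hq : q = p ^ e)
    (hord : f ∈ (maximalIdeal R) ^ q ∧ f ∉ (maximalIdeal R) ^ (q + 1)) :
    sInf {r : ℝ | ∃ (t e' : ℕ),
        f ^ t ∈ Ideal.span ((· ^ (p ^ e')) '' (maximalIdeal R : Set R)) ∧
        r = (t : ℝ) / (p : ℝ) ^ e'} = 1 / (q : ℝ)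
      ↔ f ∈ Ideal.span ((· ^ q) '' (maximalIdeal R : Set R)) := by
  obtain ⟨n, x, hm, hd⟩ := hreg
  obtain ⟨hf, hf'⟩ := hord
  have hexp : ExpChar R p := ExpChar.prime hp
  have hx : RegularParameters.IsPermutableRegular x := fun S i hi g hg =>
    RegularParameters.mem_span_of_mul_mem hm hd S hi hg
  have hp0 : 0 < p := hp.pos
  have hq0 : 0 < q := hq ▸ pow_pos hp0 e
  have hqR : (0 : ℝ) < q := by exact_mod_cast hq0
  have hspan : ∀ k, Ideal.span ((· ^ p ^ k) '' (maximalIdeal R : Set R)) =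
      RegularParameters.powIdeal x (fun _ => p ^ k) Finset.univ := by
    intro k
    rw [← hm]
    exact RegularParameters.span_image_pow_eq_powIdeal p k
  have hord : ∀ {t k}, f ^ t ∈ Ideal.span ((· ^ p ^ k) '' (maximalIdeal R : Set R)) →
      p ^ k ≤ t * q := by
    intro t k ht
    refine hx.le_mul_of_pow_mem hm p hp hf hf' (Ideal.span_le.mpr ?_ ht)
    rintro _ ⟨u, hu, rfl⟩
    exact Ideal.pow_mem_pow hu _
  constructor
  · intro hinf
    by_contra hfq
    have hlt : (1 : ℝ) / q < 1 / q + 1 / (q : ℝ) ^ 2 := lt_add_of_pos_right _ (by positivity)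
    refine absurd hinf (ne_of_gt (hlt.trans_le (le_csInf ?_ ?_)))
    · refine ⟨_, 1, 0, ?_, rfl⟩
      simpa using Ideal.pow_le_self hq0.ne' hf
    · rintro _ ⟨t, k, ht, rfl⟩
      have h1 : f ^ (t * q) ∈ RegularParameters.powIdeal x (fun _ => p ^ k * q) Finset.univ := by
        rw [hspan] at ht
        have := RegularParameters.pow_mem_powIdeal_mul p e ht
        rwa [← hq, ← pow_mul, mul_comm q] at this
      have hfq' : f ∉ RegularParameters.powIdeal x (fun _ => q) Finset.univ := by
        rwa [hq, hspan e, ← hq] at hfq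
      obtain ⟨s, hs⟩ := Nat.exists_eq_add_of_le (hord ht)
      rw [hs, pow_add] at h1
      have h2 := hx.mem_powIdeal_of_pow_mul_mem_powIdeal_mul hm p k _ _ _ f rfl hfq' h1
      rw [← hspan] at h2
      have h3 := hord h2
      have h4 : p ^ k * (q + 1) ≤ t * q ^ 2 := by nlinarith
      have h5 : (p : ℝ) ^ k * (q + 1) ≤ t * (q : ℝ) ^ 2 := by exact_mod_cast h4
      have hpk : (0 : ℝ) < (p : ℝ) ^ k := by positivity
      have h6 : (1 : ℝ) / q + 1 / (q : ℝ) ^ 2 = (q + 1) / (q : ℝ) ^ 2 := by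
        field_simp
      rw [h6, div_le_div_iff₀ (by positivity) hpk]
      linarith
  · intro hfq
    refine IsLeast.csInf_eq ⟨⟨1, e, ?_, ?_⟩, ?_⟩
    · rw [pow_one, ← hq]; exact hfq
    · rw [hq]; push_cast; rfl
    · rintro _ ⟨t, k, ht, rfl⟩
      have h1 : (p : ℝ) ^ k ≤ t * q := by exact_mod_cast hord ht
      have hpk : (0 : ℝ) < (p : ℝ) ^ k := by positivity
      rw [div_le_div_iff₀ hqR hpk]
      linarith
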